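/- In the preferential attachment model, the number of nodes of degree 1 at stage n is asymptotically normal: √n (N_n(1)/n − p_1) converges in distribution to N(0, σ_1²(δ)) as n → ∞, where p_1 = (2+δ)/(3+2δ) and σ_1²(δ) = (1+δ)(2+δ)² / ((3+2δ)²(4+3δ)). -/

import Mathlib

open MeasureTheory ProbabilityTheory Filter Finset

/-- The undirected preferential attachment model with parameter `δ > -1`.
`C n` is the node that node `n+1` attaches to (`0` meaning a self-loop),
`D n v` is the degree of node `v` in the graph `G n`, and `F` is the filtration
generated by the evolution of the graph. -/
structure PAModel {Ω : Type} (mΩ : MeasurableSpace Ω) (μ : Measure Ω) (δ : ℝ) : Type where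
  F : Filtration ℕ mΩ
  C : ℕ → Ω → ℕ
  D : ℕ → ℕ → Ω → ℕ
  C_le : ∀ n ω, 1 ≤ n → C n ω ≤ n
  C_meas : ∀ n, Measurable[F (n + 1)] (C n)
  D_one_one : ∀ ω, D 1 1 ω = 2
  D_one_ne : ∀ v ω, v ≠ 1 → D 1 v ω = 0
  D_meas : ∀ n v, Measurable[F n] (D n v)
  D_succ_old : ∀ n v ω, 1 ≤ v → v ≤ n →
    D (n + 1) v ω = D n v ω + if C n ω = v then 1 else 0
  D_succ_new : ∀ n ω, 1 ≤ n → D (n + 1) (n + 1) ω = if C n ω = 0 then 2 else 1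
  D_succ_out : ∀ n v ω, n + 1 < v → D (n + 1) v ω = 0
  attach_prob : ∀ n v, 1 ≤ v → v ≤ n →
    μ[Set.indicator {ω | C n ω = v} (fun _ => (1 : ℝ)) | F n]
      =ᵐ[μ] fun ω => ((D n v ω : ℝ) + δ) / (n * (2 + δ) + (1 + δ))
  self_prob : ∀ n, 1 ≤ n →
    μ[Set.indicator {ω | C n ω = 0} (fun _ => (1 : ℝ)) | F n]
      =ᵐ[μ] fun _ => (1 + δ) / (n * (2 + δ) + (1 + δ))

namespace PAModel

variable {Ω : Type} {mΩ : MeasurableSpace Ω} {μ : Measure Ω} {δ : ℝ}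

/-- `N n k` is the number of nodes of degree `k` in the graph `G n`. -/
noncomputable def N (M : PAModel mΩ μ δ) (n k : ℕ) (ω : Ω) : ℝ :=
  ((Finset.Icc 1 n).filter (fun v => M.D n v ω = k)).card

end PAModel

/-- Second-order Taylor bound for `x ↦ exp (i x)` near the origin. -/
lemma norm_exp_mul_I_sub_taylor_le {x : ℝ} (hx : |x| ≤ 1) :
    ‖Complex.exp (x * Complex.I) - (1 + x * Complex.I - (x : ℂ) ^ 2 / 2)‖ ≤ |x| ^ 3 := by
  have hn : ‖(x : ℂ) * Complex.I‖ = |x| := by simp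
  have h := Complex.exp_bound (x := x * Complex.I) (by rw [hn]; exact hx) (n := 3) (by norm_num)
  rw [hn] at h
  have e : ∑ m ∈ Finset.range 3, ((x : ℂ) * Complex.I) ^ m / (m.factorial : ℂ)
      = 1 + x * Complex.I - (x : ℂ) ^ 2 / 2 := by
    simp [Finset.sum_range_succ, mul_pow]
    ring
  rw [e] at h
  refine h.trans (mul_le_of_le_one_right (by positivity) ?_)
  norm_num [Nat.factorial]

/-- The characteristic function of a centered Bernoulli variable of parameter `q`, up to third
order. -/
lemma norm_charFun_bernoulli_sub_le {q l : ℝ} (h0 : 0 ≤ q) (h1 : q ≤ 1) (hl : |l| ≤ 1) :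
    ‖Complex.exp ((l * q : ℝ) * Complex.I) * (1 + (Complex.exp (-l * Complex.I) - 1) * q)
      - (1 - q * (1 - q) * l ^ 2 / 2)‖ ≤ |l| ^ 3 := by
  have b1 : |l * q| ≤ |l| := by
    rw [abs_mul, abs_of_nonneg h0]; exact mul_le_of_le_one_right (abs_nonneg _) h1
  have b2 : |l * (q - 1)| ≤ |l| := by
    rw [abs_mul, abs_sub_comm, abs_of_nonneg (sub_nonneg.2 h1)]
    exact mul_le_of_le_one_right (abs_nonneg _) (by linarith)
  have t1 := (norm_exp_mul_I_sub_taylor_le (b1.trans hl)).trans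
    (pow_le_pow_left₀ (abs_nonneg _) b1 3)
  have t2 := (norm_exp_mul_I_sub_taylor_le (b2.trans hl)).trans
    (pow_le_pow_left₀ (abs_nonneg _) b2 3)
  have e : Complex.exp ((l * q : ℝ) * Complex.I) * Complex.exp (-l * Complex.I)
      = Complex.exp ((l * (q - 1) : ℝ) * Complex.I) := by
    rw [← Complex.exp_add]; congr 1; push_cast; ring
  have key : Complex.exp ((l * q : ℝ) * Complex.I) * (1 + (Complex.exp (-l * Complex.I) - 1) * q)
      - (1 - q * (1 - q) * l ^ 2 / 2)
      = ((1 - q : ℝ) : ℂ) * (Complex.exp ((l * q : ℝ) * Complex.I)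
          - (1 + (l * q : ℝ) * Complex.I - ((l * q : ℝ) : ℂ) ^ 2 / 2))
        + (q : ℂ) * (Complex.exp ((l * (q - 1) : ℝ) * Complex.I)
          - (1 + (l * (q - 1) : ℝ) * Complex.I - ((l * (q - 1) : ℝ) : ℂ) ^ 2 / 2)) := by
    rw [← e]; push_cast; ring
  rw [key]
  refine (norm_add_le _ _).trans ?_
  rw [norm_mul, norm_mul, Complex.norm_of_nonneg (sub_nonneg.2 h1), Complex.norm_of_nonneg h0]
  calc _ ≤ (1 - q) * |l| ^ 3 + q * |l| ^ 3 := by gcongr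
    _ = |l| ^ 3 := by ring

lemma abs_exp_neg_sub_exp_neg_le {x y : ℝ} (hx : 0 ≤ x) (hy : 0 ≤ y) :
    |Real.exp (-x) - Real.exp (-y)| ≤ |x - y| := by
  wlog h : x ≤ y generalizing x y
  · rw [abs_sub_comm, abs_sub_comm x]
    exact this hy hx (le_of_not_ge h)
  have h1 : Real.exp (-y) = Real.exp (-x) * Real.exp (-(y - x)) := by
    rw [← Real.exp_add]; congr 1; ring
  have h2 := Real.add_one_le_exp (-(y - x))
  have h3 : Real.exp (-x) ≤ 1 := Real.exp_le_one_iff.2 (by linarith)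
  have h4 : Real.exp (-y) ≤ Real.exp (-x) := Real.exp_le_exp.2 (by linarith)
  rw [abs_of_nonneg (by linarith), abs_of_nonpos (by linarith)]
  nlinarith [Real.exp_pos (-x)]

/-- One step of the approximate recursion satisfied by the Gaussian characteristic functions with
variances growing linearly in `k`. -/
lemma abs_gaussian_step_le {a s l : ℝ} {k : ℝ} (ha0 : 0 < a) (ha1 : a ≤ 1) (hk : 1 ≤ k)
    (hl : |l| ≤ 1) (hs0 : 0 ≤ s) (hs1 : (1 + 2 * a) * s ≤ 1 / 4) :
    |(1 - (1 + 2 * a) * s * l ^ 2 / 2) * Real.exp (-(s * k * (k / (k + a) * l) ^ 2 / 2))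
      - Real.exp (-(s * (k + 1) * l ^ 2 / 2))| ≤ |l| ^ 3 + l ^ 2 / 2 * (1 / √k) := by
  set v := (1 + 2 * a) * s with hv
  have hv0 : 0 ≤ v := by positivity
  have hl2 : l ^ 2 ≤ 1 := by rw [← sq_abs]; exact pow_le_one₀ (abs_nonneg _) hl
  set B := v * l ^ 2 / 2 with hB
  set C := s * k * (k / (k + a) * l) ^ 2 / 2 with hC
  have hB0 : 0 ≤ B := by positivity
  have hC0 : 0 ≤ C := by positivity
  have hB1 : B ≤ |l| ^ 2 / 8 := by rw [sq_abs]; nlinarith [sq_nonneg l]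
  have t1 : |(1 - B) - Real.exp (-B)| ≤ |l| ^ 3 := by
    have hB2 : ‖-B‖ ≤ 1 := by
      rw [norm_neg, Real.norm_of_nonneg hB0]; rw [sq_abs] at hB1; linarith
    have h := Real.norm_exp_sub_one_sub_id_le hB2
    rw [norm_neg, Real.norm_of_nonneg hB0, Real.norm_eq_abs] at h
    rw [abs_sub_comm]
    have e : Real.exp (-B) - (1 - B) = Real.exp (-B) - 1 - -B := by ring
    rw [e]
    refine h.trans ?_
    have : B ^ 2 ≤ (|l| ^ 2 / 8) ^ 2 := pow_le_pow_left₀ hB0 hB1 2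
    have h4 : |l| ^ 4 ≤ |l| ^ 3 := pow_le_pow_of_le_one (abs_nonneg _) hl (by norm_num)
    nlinarith [abs_nonneg l, pow_nonneg (abs_nonneg l) 4]
  have t2 : |Real.exp (-(B + C)) - Real.exp (-(s * (k + 1) * l ^ 2 / 2))|
      ≤ l ^ 2 / 2 * (1 / √k) := by
    refine (abs_exp_neg_sub_exp_neg_le (by positivity) (by positivity)).trans ?_
    have e : B + C - s * (k + 1) * l ^ 2 / 2
        = l ^ 2 / 2 * (s * (a ^ 2 * (3 * k + 2 * a) / (k + a) ^ 2)) := by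
      rw [hB, hC, hv]; field_simp; ring
    rw [e, abs_of_nonneg (by positivity)]
    refine mul_le_mul_of_nonneg_left ?_ (by positivity)
    have hs : s ≤ 1 / 4 := by nlinarith
    have h1 : a ^ 2 * (3 * k + 2 * a) / (k + a) ^ 2 ≤ 3 / k := by
      rw [div_le_div_iff₀ (by positivity) (by positivity)]
      have : a ^ 2 * (3 * k + 2 * a) * k ≤ 1 * (3 * k + 2 * a) * k := by
        gcongr; exact pow_le_one₀ ha0.le ha1
      nlinarith [mul_pos ha0 (by linarith : 0 < k), sq_nonneg a]
    have h2 : 1 / k ≤ 1 / √k := by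
      refine one_div_le_one_div_of_le (by positivity) ?_
      rw [Real.sqrt_le_left (by linarith)]; nlinarith
    calc s * (a ^ 2 * (3 * k + 2 * a) / (k + a) ^ 2) ≤ 1 / 4 * (3 / k) := by gcongr
      _ = 3 / 4 * (1 / k) := by ring
      _ ≤ 1 * (1 / √k) := by gcongr; norm_num
      _ = _ := one_mul _
  have t3 : (1 - B) * Real.exp (-C) - Real.exp (-(s * (k + 1) * l ^ 2 / 2))
      = ((1 - B) - Real.exp (-B)) * Real.exp (-C)
        + (Real.exp (-(B + C)) - Real.exp (-(s * (k + 1) * l ^ 2 / 2))) := by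
    rw [neg_add, Real.exp_add]; ring
  rw [t3]
  refine (abs_add_le _ _).trans (add_le_add ?_ t2)
  rw [abs_mul, abs_of_pos (Real.exp_pos _)]
  exact (mul_le_of_le_one_right (abs_nonneg _) (Real.exp_le_one_iff.2 (by linarith))).trans t1

lemma sqrt_add_inv_sqrt_le {k : ℝ} (hk : 1 ≤ k) : 4 * √k + 1 / √k ≤ 4 * √(k + 1) := by
  have hpos : 0 < √k := Real.sqrt_pos.2 (by linarith)
  have hsq := Real.sq_sqrt (by linarith : 0 ≤ k)
  refine (pow_le_pow_iff_left₀ (by positivity) (by positivity) two_ne_zero).1 ?_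
  rw [mul_pow, Real.sq_sqrt (by linarith)]
  have h1 : (1 / √k) ^ 2 ≤ 1 := by
    rw [div_pow, hsq, one_pow]; exact (div_le_one (by linarith)).2 hk
  have h2 : √k * (1 / √k) = 1 := mul_one_div_cancel hpos.ne'
  nlinarith

/-- Integrated form of the pull-out property for complex-valued multipliers. -/
lemma integral_smul_eq_of_condExp {Ω : Type*} {m mΩ : MeasurableSpace Ω} {μ : Measure Ω}
    [IsFiniteMeasure μ] (hm : m ≤ mΩ) {B q : Ω → ℝ} {h : Ω → ℂ} (hB : Integrable B μ)
    (hq : μ[B | m] =ᵐ[μ] q) (hh : StronglyMeasurable[m] h) (hBh : Integrable (B • h) μ) :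
    ∫ ω, B ω • h ω ∂μ = ∫ ω, q ω • h ω ∂μ := by
  have h1 := condExp_smul_of_aestronglyMeasurable_right hB hBh hh.aestronglyMeasurable
  calc ∫ ω, B ω • h ω ∂μ = ∫ ω, (μ[B • h | m]) ω ∂μ := (integral_condExp hm).symm
    _ = ∫ ω, q ω • h ω ∂μ := by
      refine integral_congr_ae ?_
      filter_upwards [h1, hq] with ω e1 e2
      rw [e1, Pi.smul_apply', e2]

namespace PAModel

variable {Ω : Type} {mΩ : MeasurableSpace Ω} {μ : Measure Ω} {δ : ℝ} (M : PAModel mΩ μ δ)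

lemma one_le_D {n v : ℕ} (hv : 1 ≤ v) (hvn : v ≤ n) (ω : Ω) : 1 ≤ M.D n v ω := by
  induction n, hv.trans hvn using Nat.le_induction with
  | base =>
    obtain rfl : v = 1 := le_antisymm hvn hv
    simp [M.D_one_one]
  | succ n hn ih =>
    rcases Nat.lt_or_ge n v with h | h
    · obtain rfl : v = n + 1 := by omega
      rw [M.D_succ_new n ω hn]
      split_ifs <;> norm_num
    · rw [M.D_succ_old n v ω hv h]
      exact (ih h).trans (Nat.le_add_right _ _)

lemma N_eq_sum (n : ℕ) (ω : Ω) :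
    M.N n 1 ω = ∑ v ∈ Finset.Icc 1 n, if M.D n v ω = 1 then (1 : ℝ) else 0 := by
  simp [N]

lemma N_nonneg (n : ℕ) (ω : Ω) : 0 ≤ M.N n 1 ω := Nat.cast_nonneg _

lemma N_le (n : ℕ) (ω : Ω) : M.N n 1 ω ≤ n := by
  refine Nat.cast_le.2 ((Finset.card_filter_le _ _).trans ?_)
  simp

lemma N_one (ω : Ω) : M.N 1 1 ω = 0 := by
  simp [N_eq_sum, M.D_one_one]

lemma measurable_N (n : ℕ) : Measurable[M.F n] (M.N n 1) := by
  have : M.N n 1 = fun ω => ∑ v ∈ Finset.Icc 1 n, if M.D n v ω = 1 then (1 : ℝ) else 0 :=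
    funext (M.N_eq_sum n)
  rw [this]
  refine Finset.measurable_fun_sum _ fun v _ => ?_
  exact Measurable.ite (M.D_meas n v (measurableSet_singleton 1)) measurable_const
    measurable_const

/-- The indicator of the event that the number of nodes of degree one does not grow when node
`n + 1` arrives: the new node attaches to itself or to a node of degree one. -/
noncomputable def stay (n : ℕ) (ω : Ω) : ℝ :=
  Set.indicator {ω | M.C n ω = 0} (fun _ => (1 : ℝ)) ω
    + ∑ v ∈ Finset.Icc 1 n, (if M.D n v ω = 1 then (1 : ℝ) else 0)
      * Set.indicator {ω | M.C n ω = v} (fun _ => (1 : ℝ)) ω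

lemma N_succ {n : ℕ} (hn : 1 ≤ n) (ω : Ω) :
    M.N (n + 1) 1 ω = M.N n 1 ω + 1 - M.stay n ω := by
  have hnew : (if M.D (n + 1) (n + 1) ω = 1 then (1 : ℝ) else 0)
      = 1 - Set.indicator {ω | M.C n ω = 0} (fun _ => (1 : ℝ)) ω := by
    rw [M.D_succ_new n ω hn]
    by_cases h : M.C n ω = 0 <;> simp [h]
  have hold : ∀ v ∈ Finset.Icc 1 n, (if M.D (n + 1) v ω = 1 then (1 : ℝ) else 0)
      = (if M.D n v ω = 1 then (1 : ℝ) else 0) - (if M.D n v ω = 1 then (1 : ℝ) else 0)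
        * Set.indicator {ω | M.C n ω = v} (fun _ => (1 : ℝ)) ω := by
    intro v hv
    obtain ⟨h1, h2⟩ := Finset.mem_Icc.1 hv
    have hD := M.one_le_D h1 h2 ω
    rw [M.D_succ_old n v ω h1 h2]
    by_cases h : M.C n ω = v
    · simp [h, Nat.one_le_iff_ne_zero.1 hD]
    · simp [h]
  rw [N_eq_sum, Finset.sum_Icc_succ_top (by omega), Finset.sum_congr rfl hold,
    Finset.sum_sub_distrib, hnew, N_eq_sum, stay]
  ring

lemma stay_eq_zero_or_one (n : ℕ) (ω : Ω) : M.stay n ω = 0 ∨ M.stay n ω = 1 := by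
  by_cases h : M.C n ω = 0
  · right
    have : ∀ v ∈ Finset.Icc 1 n, (if M.D n v ω = 1 then (1 : ℝ) else 0)
        * Set.indicator {ω | M.C n ω = v} (fun _ => (1 : ℝ)) ω = 0 := by
      intro v hv
      have : (0 : ℕ) ≠ v := by have := (Finset.mem_Icc.1 hv).1; omega
      simp [h, this]
    rw [stay, Finset.sum_eq_zero this]
    simp [h]
  · have e : M.stay n ω = ∑ v ∈ Finset.Icc 1 n,
        if M.C n ω = v then (if M.D n v ω = 1 then (1 : ℝ) else 0) else 0 := by
      simp [stay, h, Set.indicator_apply]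
    rw [e, Finset.sum_ite_eq]
    split_ifs <;> simp

lemma measurableSet_C_eq (n v : ℕ) : MeasurableSet {ω | M.C n ω = v} :=
  M.F.le (n + 1) _ (M.C_meas n (measurableSet_singleton v))

lemma measurable_stay (n : ℕ) : Measurable (M.stay n) := by
  refine Measurable.add (measurable_const.indicator (M.measurableSet_C_eq n 0)) ?_
  refine Finset.measurable_fun_sum _ fun v _ => Measurable.mul ?_
    (measurable_const.indicator (M.measurableSet_C_eq n v))
  exact Measurable.ite (M.F.le n _ (M.D_meas n v (measurableSet_singleton 1))) measurable_const
    measurable_const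

/-- The ratio governing the growth of a node of degree one. -/
noncomputable def rate (δ : ℝ) : ℝ := (1 + δ) / (2 + δ)

lemma rate_pos {δ : ℝ} (hδ : -1 < δ) : 0 < rate δ :=
  div_pos (by linarith) (by linarith)

lemma rate_le_one {δ : ℝ} (hδ : -1 < δ) : rate δ ≤ 1 :=
  (div_le_one (by linarith)).2 (by linarith)

/-- The conditional probability, given `G n`, that the number of nodes of degree one does not grow
when node `n + 1` arrives. -/
noncomputable def stayProb (n : ℕ) (ω : Ω) : ℝ :=
  rate δ * (M.N n 1 ω + 1) / (n + rate δ)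

/-- The number of nodes of degree one, centered at its mean. -/
noncomputable def dev (n : ℕ) (ω : Ω) : ℝ :=
  M.N n 1 ω - (n - 1) / (1 + rate δ)

lemma dev_one (ω : Ω) : M.dev 1 ω = 0 := by
  simp [dev, N_one]

lemma stayProb_nonneg (hδ : -1 < δ) (n : ℕ) (ω : Ω) : 0 ≤ M.stayProb n ω := by
  have := rate_pos hδ
  have := M.N_nonneg n ω
  unfold stayProb
  positivity

lemma stayProb_le_one (hδ : -1 < δ) (n : ℕ) (ω : Ω) : M.stayProb n ω ≤ 1 := by
  have h0 := rate_pos hδ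
  have h1 := rate_le_one hδ
  have h2 := M.N_le n ω
  have h3 : (0 : ℝ) ≤ n := Nat.cast_nonneg n
  refine (div_le_one (by positivity)).2 ?_
  nlinarith [mul_le_mul_of_nonneg_left h2 h0.le]

lemma stayProb_sub (hδ : -1 < δ) (n : ℕ) (ω : Ω) :
    M.stayProb n ω - rate δ / (1 + rate δ) = rate δ / (n + rate δ) * M.dev n ω := by
  have h0 := rate_pos hδ
  have h3 : (0 : ℝ) ≤ n := Nat.cast_nonneg n
  unfold stayProb dev
  field_simp
  ring

lemma dev_succ (hδ : -1 < δ) {n : ℕ} (hn : 1 ≤ n) (ω : Ω) :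
    M.dev (n + 1) ω = n / (n + rate δ) * M.dev n ω + M.stayProb n ω - M.stay n ω := by
  have h0 := rate_pos hδ
  have h3 : (0 : ℝ) ≤ n := Nat.cast_nonneg n
  unfold stayProb dev
  rw [M.N_succ hn]
  push_cast
  field_simp
  ring

lemma abs_dev_le (hδ : -1 < δ) {n : ℕ} (hn : 1 ≤ n) (ω : Ω) : |M.dev n ω| ≤ n := by
  have h0 := rate_pos hδ
  have h1 : (1 : ℝ) ≤ n := by exact_mod_cast hn
  have h2 := M.N_le n ω
  have h3 := M.N_nonneg n ω
  have h4 : ((n : ℝ) - 1) / (1 + rate δ) ≤ n - 1 := div_le_self (by linarith) (by linarith)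
  have h5 : 0 ≤ ((n : ℝ) - 1) / (1 + rate δ) := div_nonneg (by linarith) (by linarith)
  unfold dev
  rw [abs_le]
  constructor <;> linarith

lemma measurable_dev (n : ℕ) : Measurable[M.F n] (M.dev n) :=
  (M.measurable_N n).sub_const _

lemma measurable_stayProb (n : ℕ) : Measurable[M.F n] (M.stayProb n) :=
  (((M.measurable_N n).add_const 1).const_mul _).div_const _

variable [IsProbabilityMeasure μ]

lemma integrable_stay (n : ℕ) : Integrable (M.stay n) μ := by
  refine Integrable.of_bound (M.measurable_stay n).aestronglyMeasurable 1 (ae_of_all _ fun ω => ?_)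
  rcases M.stay_eq_zero_or_one n ω with h | h <;> simp [h]

lemma condExp_stay {n : ℕ} (hn : 1 ≤ n) :
    μ[M.stay n | M.F n]
      =ᵐ[μ] fun ω => (1 + δ) * (M.N n 1 ω + 1) / (n * (2 + δ) + (1 + δ)) := by
  have hint : ∀ v, Integrable (Set.indicator {ω | M.C n ω = v} (fun _ => (1 : ℝ))) μ := fun v =>
    (integrable_const 1).indicator (M.measurableSet_C_eq n v)
  set d : ℕ → Ω → ℝ := fun v ω => if M.D n v ω = 1 then 1 else 0 with hd
  have hdm : ∀ v, StronglyMeasurable[M.F n] (d v) := fun v =>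
    (Measurable.ite (M.D_meas n v (measurableSet_singleton 1)) measurable_const
      measurable_const).stronglyMeasurable
  have hdint : ∀ v, Integrable (d v * Set.indicator {ω | M.C n ω = v} (fun _ => (1 : ℝ))) μ := by
    intro v
    refine (hint v).bdd_mul (c := 1) ((hdm v).mono (M.F.le n)).aestronglyMeasurable
      (ae_of_all _ fun ω => ?_)
    simp only [hd]; split_ifs <;> simp
  have hstay : M.stay n = Set.indicator {ω | M.C n ω = 0} (fun _ => (1 : ℝ))
      + ∑ v ∈ Finset.Icc 1 n, d v * Set.indicator {ω | M.C n ω = v} (fun _ => (1 : ℝ)) := by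
    ext ω; simp [stay, hd]
  have hv : ∀ v ∈ Finset.Icc 1 n,
      μ[d v * Set.indicator {ω | M.C n ω = v} (fun _ => (1 : ℝ)) | M.F n]
        =ᵐ[μ] fun ω => d v ω * ((1 + δ) / (n * (2 + δ) + (1 + δ))) := by
    intro v hv
    obtain ⟨h1, h2⟩ := Finset.mem_Icc.1 hv
    filter_upwards [condExp_mul_of_stronglyMeasurable_left (hdm v) (hdint v) (hint v),
      M.attach_prob n v h1 h2] with ω e1 e2
    rw [e1, Pi.mul_apply, e2]
    by_cases h : M.D n v ω = 1 <;> simp [hd, h]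
  have hall : ∀ᵐ ω ∂μ, ∀ v ∈ Finset.Icc 1 n,
      (μ[d v * Set.indicator {ω | M.C n ω = v} (fun _ => (1 : ℝ)) | M.F n]) ω
        = d v ω * ((1 + δ) / (n * (2 + δ) + (1 + δ))) :=
    (Finset.eventually_all _).2 hv
  rw [hstay]
  filter_upwards [condExp_add (hint 0) (integrable_finsetSum' _ fun v _ => hdint v) (M.F n),
    condExp_finsetSum (fun v (_ : v ∈ Finset.Icc 1 n) => hdint v) (M.F n),
    M.self_prob n hn, hall] with ω e1 e2 e3 e4
  rw [e1, Pi.add_apply, e2, Finset.sum_apply, Finset.sum_congr rfl e4, ← Finset.sum_mul,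
    ← M.N_eq_sum]
  rw [show (Set.indicator {ω | M.C n ω = 0} (fun _ => (1 : ℝ)))
    = Set.indicator {ω | M.C n ω = ((0 : ℕ))} (fun _ => (1 : ℝ)) from rfl] at e3
  rw [e3]
  ring

lemma integral_stay_smul (hδ : -1 < δ) {n : ℕ} (hn : 1 ≤ n) {h : Ω → ℂ}
    (hh : Measurable[M.F n] h) {c : ℝ} (hc : ∀ ω, ‖h ω‖ ≤ c) :
    ∫ ω, M.stay n ω • h ω ∂μ = ∫ ω, M.stayProb n ω • h ω ∂μ := by
  have hq : μ[M.stay n | M.F n] =ᵐ[μ] M.stayProb n := by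
    refine (M.condExp_stay hn).trans (ae_of_all _ fun ω => ?_)
    have h2 : 0 < 2 + δ := by linarith
    have h3 : (0 : ℝ) ≤ n := Nat.cast_nonneg n
    have h4 : 0 < 1 + δ := by linarith
    simp only [stayProb, rate]
    field_simp
  refine integral_smul_eq_of_condExp (M.F.le n) (M.integrable_stay n) hq hh.stronglyMeasurable ?_
  exact (M.integrable_stay n).smul_bdd c (hh.mono (M.F.le n) le_rfl).aestronglyMeasurable
    (ae_of_all _ hc)

lemma integrable_dev_sq (hδ : -1 < δ) {n : ℕ} (hn : 1 ≤ n) :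
    Integrable (fun ω => M.dev n ω ^ 2) μ := by
  refine Integrable.of_bound
    (((M.measurable_dev n).mono (M.F.le n) le_rfl).pow_const 2).aestronglyMeasurable
    ((n : ℝ) ^ 2) (ae_of_all _ fun ω => ?_)
  rw [norm_pow, Real.norm_eq_abs]
  exact pow_le_pow_left₀ (abs_nonneg _) (M.abs_dev_le hδ hn ω) 2

lemma integrable_dev (hδ : -1 < δ) {n : ℕ} (hn : 1 ≤ n) : Integrable (M.dev n) μ :=
  Integrable.of_bound ((M.measurable_dev n).mono (M.F.le n) le_rfl).aestronglyMeasurable n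
    (ae_of_all _ fun ω => M.abs_dev_le hδ hn ω)

lemma integral_dev_sq_le (hδ : -1 < δ) {n : ℕ} (hn : 1 ≤ n) :
    ∫ ω, M.dev n ω ^ 2 ∂μ ≤ n := by
  induction n, hn using Nat.le_induction with
  | base => simp [dev_one]
  | succ n hn ih =>
    have h0 := rate_pos hδ
    have hn0 : (0 : ℝ) < n := by exact_mod_cast hn
    set r : ℝ := n / (n + rate δ) with hr
    have hr0 : 0 ≤ r := by positivity
    have hr1 : r ≤ 1 := (div_le_one (by positivity)).2 (by linarith)
    set g : Ω → ℝ := fun ω => 1 - 2 * (r * M.dev n ω + M.stayProb n ω) with hg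
    have hgm : Measurable[M.F n] g :=
      (((((M.measurable_dev n).const_mul r).add (M.measurable_stayProb n)).const_mul 2).const_sub 1)
    have hgb : ∀ ω, |g ω| ≤ 2 * n + 3 := fun ω => by
      have h1 := abs_le.1 (M.abs_dev_le hδ hn ω)
      have h2 := M.stayProb_nonneg hδ n ω
      have h3 := M.stayProb_le_one hδ n ω
      have h4 : |r * M.dev n ω| ≤ n := by
        rw [abs_mul, abs_of_nonneg hr0]
        exact (mul_le_of_le_one_left (abs_nonneg _) hr1).trans (M.abs_dev_le hδ hn ω)
      have h5 := abs_le.1 h4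
      simp only [hg]
      rw [abs_le]
      constructor <;> linarith
    have hgc := M.integral_stay_smul hδ hn (h := fun ω => (g ω : ℂ))
      (Complex.measurable_ofReal.comp hgm) (c := 2 * n + 3) fun ω => by simpa using hgb ω
    have hgr : ∫ ω, M.stay n ω * g ω ∂μ = ∫ ω, M.stayProb n ω * g ω ∂μ := by
      have e : ∀ x y : ℝ, x • (y : ℂ) = ((x * y : ℝ) : ℂ) := fun x y => by simp
      simp only [e, integral_complex_ofReal] at hgc
      exact_mod_cast hgc
    have hgm' := (hgm.mono (M.F.le n) le_rfl).aestronglyMeasurable (μ := μ)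
    have hqm := ((M.measurable_stayProb n).mono (M.F.le n) le_rfl).aestronglyMeasurable (μ := μ)
    have hq : Integrable (M.stayProb n) μ :=
      Integrable.of_bound hqm 1 (ae_of_all _ fun ω => by
        rw [Real.norm_of_nonneg (M.stayProb_nonneg hδ n ω)]; exact M.stayProb_le_one hδ n ω)
    have i1 : Integrable (fun ω => M.stay n ω * g ω) μ :=
      (M.integrable_stay n).mul_bdd (c := 2 * n + 3) hgm' (ae_of_all _ hgb)
    have i2 : Integrable (fun ω => M.stayProb n ω * g ω) μ :=
      hq.mul_bdd (c := 2 * n + 3) hgm' (ae_of_all _ hgb)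
    have i3 : Integrable (fun ω => M.dev (n + 1) ω ^ 2 - M.stay n ω * g ω) μ :=
      (M.integrable_dev_sq hδ (by omega)).sub i1
    have e1 : ∫ ω, M.dev (n + 1) ω ^ 2 ∂μ
        = ∫ ω, (M.dev (n + 1) ω ^ 2 - M.stay n ω * g ω + M.stayProb n ω * g ω) ∂μ := by
      rw [integral_add i3 i2, integral_sub (M.integrable_dev_sq hδ (by omega)) i1, hgr]
      ring
    have e2 : ∀ ω, M.dev (n + 1) ω ^ 2 - M.stay n ω * g ω + M.stayProb n ω * g ω
        ≤ M.dev n ω ^ 2 + 1 := fun ω => by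
      have hs : M.stay n ω ^ 2 = M.stay n ω := by
        rcases M.stay_eq_zero_or_one n ω with h | h <;> simp [h]
      have hrs : r ^ 2 * M.dev n ω ^ 2 ≤ M.dev n ω ^ 2 :=
        mul_le_of_le_one_left (sq_nonneg _) (pow_le_one₀ hr0 hr1)
      rw [M.dev_succ hδ hn, ← hr]
      have : (r * M.dev n ω + M.stayProb n ω - M.stay n ω) ^ 2 - M.stay n ω * g ω
          + M.stayProb n ω * g ω = r ^ 2 * M.dev n ω ^ 2
            + (M.stay n ω ^ 2 - M.stay n ω) + M.stayProb n ω - M.stayProb n ω ^ 2 := by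
        simp only [hg]; ring
      rw [this, hs]
      nlinarith [M.stayProb_le_one hδ n ω, sq_nonneg (M.stayProb n ω)]
    rw [e1]
    calc _ ≤ ∫ ω, (M.dev n ω ^ 2 + 1) ∂μ :=
          integral_mono (i3.add i2) ((M.integrable_dev_sq hδ hn).add (integrable_const 1)) e2
      _ = ∫ ω, M.dev n ω ^ 2 ∂μ + 1 := by
          rw [integral_add (M.integrable_dev_sq hδ hn) (integrable_const 1)]; simp
      _ ≤ _ := by push_cast; linarith

lemma integral_abs_dev_le (hδ : -1 < δ) {n : ℕ} (hn : 1 ≤ n) :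
    ∫ ω, |M.dev n ω| ∂μ ≤ √n := by
  have hs : 0 < √(n : ℝ) := Real.sqrt_pos.2 (by exact_mod_cast hn)
  have hsq := Real.sq_sqrt (Nat.cast_nonneg (α := ℝ) n)
  have hi : Integrable (fun ω => M.dev n ω ^ 2 / (2 * √n) + √n / 2) μ :=
    ((M.integrable_dev_sq hδ hn).div_const _).add (integrable_const _)
  calc ∫ ω, |M.dev n ω| ∂μ ≤ ∫ ω, (M.dev n ω ^ 2 / (2 * √n) + √n / 2) ∂μ := by
        refine integral_mono (M.integrable_dev hδ hn).abs hi fun ω => ?_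
        have h := sq_nonneg (|M.dev n ω| - √n)
        have e : M.dev n ω ^ 2 / (2 * √n) + √n / 2 - |M.dev n ω|
            = (|M.dev n ω| - √n) ^ 2 / (2 * √n) := by
          rw [← sq_abs]; field_simp; ring
        have : 0 ≤ (|M.dev n ω| - √n) ^ 2 / (2 * √n) := by positivity
        dsimp only
        linarith
    _ = (∫ ω, M.dev n ω ^ 2 ∂μ) / (2 * √n) + √n / 2 := by
        rw [integral_add ((M.integrable_dev_sq hδ hn).div_const _) (integrable_const _),
          integral_div]
        simp
    _ ≤ n / (2 * √n) + √n / 2 := by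
        gcongr; exact M.integral_dev_sq_le hδ hn
    _ = √n := by
        nth_rewrite 1 [← hsq]; field_simp; ring

lemma integrable_exp_dev (n : ℕ) (l : ℝ) :
    Integrable (fun ω => Complex.exp ((l * M.dev n ω : ℝ) * Complex.I)) μ := by
  have hm : Measurable (M.dev n) := (M.measurable_dev n).mono (M.F.le n) le_rfl
  refine Integrable.of_bound (C := 1) (by fun_prop) (ae_of_all _ fun ω => ?_)
  rw [Complex.norm_exp_ofReal_mul_I]

lemma integral_exp_dev_succ (hδ : -1 < δ) {n : ℕ} (hn : 1 ≤ n) (l : ℝ) :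
    ∫ ω, Complex.exp ((l * M.dev (n + 1) ω : ℝ) * Complex.I) ∂μ
      = ∫ ω, Complex.exp ((n / (n + rate δ) * l * M.dev n ω : ℝ) * Complex.I)
        * (Complex.exp ((l * M.stayProb n ω : ℝ) * Complex.I)
          * (1 + (Complex.exp (-l * Complex.I) - 1) * M.stayProb n ω)) ∂μ := by
  set r : ℝ := n / (n + rate δ) with hr
  set u : Ω → ℂ := fun ω =>
    Complex.exp ((l * (r * M.dev n ω + M.stayProb n ω) : ℝ) * Complex.I) with hu
  set h : Ω → ℂ := fun ω => u ω * (Complex.exp (-l * Complex.I) - 1) with hh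
  have hum : Measurable[M.F n] u := by
    have := M.measurable_dev n
    have := M.measurable_stayProb n
    fun_prop
  have hhm : Measurable[M.F n] h := hum.mul_const _
  have hub : ∀ ω, ‖u ω‖ = 1 := fun ω => Complex.norm_exp_ofReal_mul_I _
  have hhb : ∀ ω, ‖h ω‖ ≤ ‖Complex.exp (-l * Complex.I) - 1‖ := fun ω => by
    simp only [hh]; rw [norm_mul, hub, one_mul]
  have hui : Integrable u μ :=
    Integrable.of_bound (C := 1) (hum.mono (M.F.le n) le_rfl).aestronglyMeasurable
      (ae_of_all _ fun ω => (hub ω).le)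
  have hqi : Integrable (M.stayProb n) μ :=
    Integrable.of_bound ((M.measurable_stayProb n).mono (M.F.le n) le_rfl).aestronglyMeasurable 1
      (ae_of_all _ fun ω => by
        rw [Real.norm_of_nonneg (M.stayProb_nonneg hδ n ω)]; exact M.stayProb_le_one hδ n ω)
  have hh' := (hhm.mono (M.F.le n) le_rfl).aestronglyMeasurable (μ := μ)
  have i1 : Integrable (fun ω => M.stay n ω • h ω) μ :=
    (M.integrable_stay n).smul_bdd _ hh' (ae_of_all _ hhb)
  have i2 : Integrable (fun ω => M.stayProb n ω • h ω) μ :=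
    hqi.smul_bdd _ hh' (ae_of_all _ hhb)
  have e1 : ∀ ω, Complex.exp ((l * M.dev (n + 1) ω : ℝ) * Complex.I)
      = u ω + M.stay n ω • h ω := fun ω => by
    rw [M.dev_succ hδ hn, ← hr]
    rcases M.stay_eq_zero_or_one n ω with hs | hs
    · simp [hs, hu]
    · have : Complex.exp ((l * (r * M.dev n ω + M.stayProb n ω - 1) : ℝ) * Complex.I)
          = u ω * Complex.exp (-l * Complex.I) := by
        rw [← Complex.exp_add]; congr 1; push_cast; ring
      rw [hs, this, one_smul]
      simp only [hh]; ring
  have e2 : ∀ ω, Complex.exp ((r * l * M.dev n ω : ℝ) * Complex.I)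
        * (Complex.exp ((l * M.stayProb n ω : ℝ) * Complex.I)
          * (1 + (Complex.exp (-l * Complex.I) - 1) * M.stayProb n ω))
      = u ω + M.stayProb n ω • h ω := fun ω => by
    have : u ω = Complex.exp ((r * l * M.dev n ω : ℝ) * Complex.I)
        * Complex.exp ((l * M.stayProb n ω : ℝ) * Complex.I) := by
      rw [← Complex.exp_add]; simp only [hu]; congr 1; push_cast; ring
    simp only [hh, Complex.real_smul]
    rw [this]; ring
  simp_rw [e1, e2]
  rw [integral_add hui i1, integral_add hui i2, M.integral_stay_smul hδ hn hhm hhb]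

/-- The asymptotic variance of the number of nodes of degree one. -/
noncomputable def asympVar (δ : ℝ) : ℝ :=
  rate δ / ((1 + rate δ) ^ 2 * (1 + 2 * rate δ))

lemma asympVar_nonneg {δ : ℝ} (hδ : -1 < δ) : 0 ≤ asympVar δ := by
  have := rate_pos hδ
  unfold asympVar
  positivity

lemma mul_asympVar {δ : ℝ} (hδ : -1 < δ) :
    (1 + 2 * rate δ) * asympVar δ = rate δ / (1 + rate δ) * (1 - rate δ / (1 + rate δ)) := by
  have := rate_pos hδ
  unfold asympVar
  field_simp
  ring

lemma mul_asympVar_le {δ : ℝ} (hδ : -1 < δ) : (1 + 2 * rate δ) * asympVar δ ≤ 1 / 4 := by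
  rw [mul_asympVar hδ]
  nlinarith [sq_nonneg (rate δ / (1 + rate δ) - 1 / 2)]

lemma asympVar_eq {δ : ℝ} (hδ : -1 < δ) :
    asympVar δ = (1 + δ) * (2 + δ) ^ 2 / ((3 + 2 * δ) ^ 2 * (4 + 3 * δ)) := by
  have h2 : 0 < 2 + δ := by linarith
  have h3 : 0 < 3 + 2 * δ := by linarith
  have h4 : 0 < 4 + 3 * δ := by linarith
  have e1 : 1 + rate δ = (3 + 2 * δ) / (2 + δ) := by unfold rate; field_simp; ring
  have e2 : 1 + 2 * rate δ = (4 + 3 * δ) / (2 + δ) := by unfold rate; field_simp; ring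
  rw [asympVar, e1, e2, rate]
  field_simp

lemma norm_integral_exp_dev_succ_sub_le (hδ : -1 < δ) {n : ℕ} (hn : 1 ≤ n) {l : ℝ}
    (hl : |l| ≤ 1) :
    ‖∫ ω, Complex.exp ((l * M.dev (n + 1) ω : ℝ) * Complex.I) ∂μ
      - ((1 - (1 + 2 * rate δ) * asympVar δ * l ^ 2 / 2 : ℝ) : ℂ)
        * ∫ ω, Complex.exp ((n / (n + rate δ) * l * M.dev n ω : ℝ) * Complex.I) ∂μ‖
      ≤ |l| ^ 3 + l ^ 2 / 2 * (1 / √n) := by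
  have h0 := rate_pos hδ
  have hn0 : (0 : ℝ) < n := by exact_mod_cast hn
  set r : ℝ := n / (n + rate δ) with hr
  set w : ℝ := 1 - (1 + 2 * rate δ) * asympVar δ * l ^ 2 / 2 with hw
  set ψ : Ω → ℂ := fun ω => Complex.exp ((l * M.stayProb n ω : ℝ) * Complex.I)
          * (1 + (Complex.exp (-l * Complex.I) - 1) * M.stayProb n ω) with hψ
  have hψb : ∀ ω, ‖ψ ω - w‖ ≤ |l| ^ 3 + l ^ 2 / 2 * (|M.dev n ω| / n) := fun ω => by
    have hq0 := M.stayProb_nonneg hδ n ω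
    have hq1 := M.stayProb_le_one hδ n ω
    have hqs := M.stayProb_sub hδ n ω
    have t1 := norm_charFun_bernoulli_sub_le hq0 hq1 hl
    have hv : |M.stayProb n ω * (1 - M.stayProb n ω) - (1 + 2 * rate δ) * asympVar δ|
        ≤ |M.dev n ω| / n := by
      have hp0 : 0 ≤ rate δ / (1 + rate δ) := by positivity
      have hp1 : rate δ / (1 + rate δ) ≤ 1 := (div_le_one (by positivity)).2 (by linarith)
      have e : M.stayProb n ω * (1 - M.stayProb n ω) - (1 + 2 * rate δ) * asympVar δ
          = (M.stayProb n ω - rate δ / (1 + rate δ))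
            * (1 - M.stayProb n ω - rate δ / (1 + rate δ)) := by
        rw [mul_asympVar hδ]; ring
      rw [e, hqs, abs_mul]
      refine (mul_le_of_le_one_right (abs_nonneg _) ?_).trans ?_
      · rw [abs_le]; constructor <;> linarith
      · rw [abs_mul, abs_of_pos (by positivity), div_mul_eq_mul_div]
        have := rate_le_one hδ
        gcongr
        · exact mul_le_of_le_one_left (abs_nonneg _) this
        · linarith
    have e : ψ ω - w = (ψ ω - (1 - M.stayProb n ω * (1 - M.stayProb n ω) * l ^ 2 / 2))
        + ((-(l ^ 2 / 2) * (M.stayProb n ω * (1 - M.stayProb n ω)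
          - (1 + 2 * rate δ) * asympVar δ) : ℝ) : ℂ) := by
      rw [hw]; push_cast; ring
    rw [e]
    refine (norm_add_le _ _).trans (add_le_add t1 ?_)
    rw [Complex.norm_real, Real.norm_eq_abs, abs_mul, abs_neg, abs_of_nonneg (by positivity)]
    gcongr
  have hdm : Measurable (M.dev n) := (M.measurable_dev n).mono (M.F.le n) le_rfl
  have hqm : Measurable (M.stayProb n) := (M.measurable_stayProb n).mono (M.F.le n) le_rfl
  have hbi : Integrable (fun ω => |l| ^ 3 + l ^ 2 / 2 * (|M.dev n ω| / n)) μ :=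
    (integrable_const _).add (((M.integrable_dev hδ hn).abs.div_const _).const_mul _)
  have hE : ∀ ω, ‖Complex.exp ((r * l * M.dev n ω : ℝ) * Complex.I) * (ψ ω - w)‖
      ≤ |l| ^ 3 + l ^ 2 / 2 * (|M.dev n ω| / n) := fun ω => by
    rw [norm_mul, Complex.norm_exp_ofReal_mul_I, one_mul]; exact hψb ω
  have hEi : Integrable
      (fun ω => Complex.exp ((r * l * M.dev n ω : ℝ) * Complex.I) * (ψ ω - w)) μ :=
    hbi.mono' (by simp only [hψ]; fun_prop) (ae_of_all _ hE)
  have e : ∫ ω, Complex.exp ((l * M.dev (n + 1) ω : ℝ) * Complex.I) ∂μ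
      - (w : ℂ) * ∫ ω, Complex.exp ((r * l * M.dev n ω : ℝ) * Complex.I) ∂μ
      = ∫ ω, Complex.exp ((r * l * M.dev n ω : ℝ) * Complex.I) * (ψ ω - w) ∂μ := by
    rw [M.integral_exp_dev_succ hδ hn, sub_eq_iff_eq_add, ← integral_const_mul,
      ← integral_add hEi ((M.integrable_exp_dev n _).const_mul _)]
    refine integral_congr_ae (ae_of_all _ fun ω => ?_)
    simp only [hψ]
    ring
  rw [e]
  refine (norm_integral_le_of_norm_le hbi (ae_of_all _ hE)).trans ?_
  rw [integral_add (integrable_const _) (((M.integrable_dev hδ hn).abs.div_const _).const_mul _),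
    integral_const_mul, integral_div]
  simp only [integral_const, probReal_univ, one_smul]
  refine add_le_add le_rfl (mul_le_mul_of_nonneg_left ?_ (by positivity))
  rw [div_le_iff₀ hn0]
  refine (M.integral_abs_dev_le hδ hn).trans (le_of_eq ?_)
  rw [one_div, inv_mul_eq_div, Real.div_sqrt]

lemma norm_integral_exp_dev_sub_le (hδ : -1 < δ) {n : ℕ} (hn : 1 ≤ n) {l : ℝ} (hl : |l| ≤ 1) :
    ‖∫ ω, Complex.exp ((l * M.dev n ω : ℝ) * Complex.I) ∂μ
      - (Real.exp (-(asympVar δ * n * l ^ 2 / 2)) : ℝ)‖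
      ≤ 4 * √n * l ^ 2 + 2 * n * |l| ^ 3 := by
  have h0 := rate_pos hδ
  have hs0 := asympVar_nonneg hδ
  have hs1 := mul_asympVar_le hδ
  induction n, hn using Nat.le_induction generalizing l with
  | base =>
    have hs : asympVar δ ≤ 1 / 4 := by nlinarith
    have hx : 0 ≤ asympVar δ * (1 : ℕ) * l ^ 2 / 2 := by positivity
    have h := abs_exp_neg_sub_exp_neg_le le_rfl hx
    rw [neg_zero, Real.exp_zero, zero_sub, abs_neg, abs_of_nonneg hx] at h
    have e : ∫ ω, Complex.exp ((l * M.dev 1 ω : ℝ) * Complex.I) ∂μ = ((1 : ℝ) : ℂ) := by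
      simp [dev_one]
    rw [e, ← Complex.ofReal_sub, Complex.norm_real, Real.norm_eq_abs]
    refine h.trans ?_
    simp only [Nat.cast_one, Real.sqrt_one]
    nlinarith [sq_nonneg l, pow_nonneg (abs_nonneg l) 3]
  | succ n hn ih =>
    have hn1 : (1 : ℝ) ≤ n := by exact_mod_cast hn
    set r : ℝ := n / (n + rate δ) with hr
    set w : ℝ := 1 - (1 + 2 * rate δ) * asympVar δ * l ^ 2 / 2 with hw
    have hr0 : 0 ≤ r := by positivity
    have hr1 : r ≤ 1 := (div_le_one (by positivity)).2 (by linarith)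
    have hrl : |r * l| ≤ |l| := by
      rw [abs_mul, abs_of_nonneg hr0]; exact mul_le_of_le_one_left (abs_nonneg _) hr1
    have hl2 : l ^ 2 ≤ 1 := by rw [← sq_abs]; exact pow_le_one₀ (abs_nonneg _) hl
    have hw1 : |w| ≤ 1 := by
      have : 0 ≤ (1 + 2 * rate δ) * asympVar δ * l ^ 2 := by positivity
      rw [abs_le]
      constructor <;> nlinarith [sq_nonneg l]
    have t1 := M.norm_integral_exp_dev_succ_sub_le hδ hn hl
    have t2 := ih (hrl.trans hl)
    have t3 := abs_gaussian_step_le h0 (rate_le_one hδ) hn1 hl hs0 hs1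
    rw [← hr, ← hw] at t1 t3
    set A := ∫ ω, Complex.exp ((l * M.dev (n + 1) ω : ℝ) * Complex.I) ∂μ
    set A' := ∫ ω, Complex.exp ((r * l * M.dev n ω : ℝ) * Complex.I) ∂μ
    set G := Real.exp (-(asympVar δ * n * (r * l) ^ 2 / 2))
    have e : A - (Real.exp (-(asympVar δ * (n + 1 : ℕ) * l ^ 2 / 2)) : ℝ)
        = (A - w * A') + (w * (A' - G)
          + ((w * G - Real.exp (-(asympVar δ * (n + 1) * l ^ 2 / 2)) : ℝ) : ℂ)) := by
      push_cast; ring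
    have t4 : ‖(w : ℂ) * (A' - G)‖ ≤ 4 * √n * l ^ 2 + 2 * n * |l| ^ 3 := by
      rw [norm_mul, Complex.norm_real, Real.norm_eq_abs]
      refine (mul_le_of_le_one_left (norm_nonneg _) hw1).trans (t2.trans ?_)
      have : (r * l) ^ 2 ≤ l ^ 2 := sq_le_sq.2 hrl
      gcongr
    rw [e]
    refine (norm_add_le _ _).trans ((add_le_add t1 ((norm_add_le _ _).trans
      (add_le_add t4 ((Complex.norm_real _).trans_le t3)))).trans ?_)
    have h5 := mul_le_mul_of_nonneg_left (sqrt_add_inv_sqrt_le hn1) (sq_nonneg l)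
    push_cast
    nlinarith

lemma tendsto_charFun_dev (hδ : -1 < δ) (t : ℝ) :
    Tendsto (fun n : ℕ => ∫ ω, Complex.exp ((t / √n * M.dev n ω : ℝ) * Complex.I) ∂μ) atTop
      (nhds (Real.exp (-(asympVar δ * t ^ 2 / 2)) : ℝ)) := by
  have hsqrt : Tendsto (fun n : ℕ => √(n : ℝ)) atTop atTop :=
    Real.tendsto_sqrt_atTop.comp tendsto_natCast_atTop_atTop
  have hlim : Tendsto (fun n : ℕ => (4 * t ^ 2 + 2 * |t| ^ 3) / √n) atTop (nhds 0) :=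
    hsqrt.const_div_atTop _
  rw [tendsto_iff_norm_sub_tendsto_zero]
  refine squeeze_zero' (Eventually.of_forall fun _ => norm_nonneg _) ?_ hlim
  filter_upwards [eventually_ge_atTop 1, hsqrt.eventually_ge_atTop |t|] with n hn hnt
  have hs : 0 < √(n : ℝ) := Real.sqrt_pos.2 (by exact_mod_cast hn)
  have hsq := Real.sq_sqrt (Nat.cast_nonneg (α := ℝ) n)
  have habs : |t / √n| = |t| / √n := by rw [abs_div, abs_of_pos hs]
  have h := M.norm_integral_exp_dev_sub_le hδ hn (l := t / √n)
    (by rw [habs]; exact (div_le_one hs).2 hnt)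
  have e : asympVar δ * n * (t / √n) ^ 2 / 2 = asympVar δ * t ^ 2 / 2 := by
    rw [div_pow, hsq]
    have : (n : ℝ) ≠ 0 := by positivity
    field_simp
  rw [e] at h
  refine h.trans (le_of_eq ?_)
  rw [habs]
  nth_rewrite 3 [← hsq]
  field_simp

end PAModel

/-- The number of nodes of degree 1 at stage `n` is asymptotically normal:
`√n (N_n(1)/n − p₁)` converges in distribution (i.e. integrals against every
bounded continuous function converge) to `N(0, σ₁²(δ))`, where
`p₁ = (2+δ)/(3+2δ)` and `σ₁²(δ) = (1+δ)(2+δ)²/((3+2δ)²(4+3δ))`. -/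
theorem clt_degree_one {Ω : Type} {mΩ : MeasurableSpace Ω} {μ : Measure Ω}
    [IsProbabilityMeasure μ] {δ : ℝ} (hδ : -1 < δ) (M : PAModel mΩ μ δ) :
    ∀ f : BoundedContinuousFunction ℝ ℝ,
      Tendsto
        (fun n : ℕ =>
          ∫ ω, f (Real.sqrt n * (M.N n 1 ω / n - (2 + δ) / (3 + 2 * δ))) ∂μ)
        atTop
        (nhds (∫ x, f x
          ∂(gaussianReal 0
            (((1 + δ) * (2 + δ) ^ 2 / ((3 + 2 * δ) ^ 2 * (4 + 3 * δ))).toNNReal)))) := by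
  set X : ℕ → Ω → ℝ := fun n ω => √n * (M.N n 1 ω / n - (2 + δ) / (3 + 2 * δ)) with hX
  have hXm : ∀ n, Measurable (X n) := fun n =>
    ((((M.measurable_N n).mono (M.F.le n) le_rfl).div_const _).sub_const _).const_mul _
  let P : ℕ → ProbabilityMeasure ℝ := fun n =>
    ⟨μ.map (X n), Measure.isProbabilityMeasure_map (hXm n).aemeasurable⟩
  let Q : ProbabilityMeasure ℝ :=
    ⟨gaussianReal 0 (((1 + δ) * (2 + δ) ^ 2 / ((3 + 2 * δ) ^ 2 * (4 + 3 * δ))).toNNReal),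
      inferInstance⟩
  have hPQ : Tendsto P atTop (nhds Q) := by
    refine ProbabilityMeasure.tendsto_iff_tendsto_charFun.2 fun t => ?_
    have hQ : charFun (Q : Measure ℝ) t
        = (Real.exp (-(PAModel.asympVar δ * t ^ 2 / 2)) : ℝ) := by
      change charFun (gaussianReal 0 _) t = _
      rw [charFun_gaussianReal, ← PAModel.asympVar_eq hδ,
        Real.coe_toNNReal _ (PAModel.asympVar_nonneg hδ)]
      push_cast
      congr 1
      ring
    have hp : 1 + PAModel.rate δ = (3 + 2 * δ) / (2 + δ) := by
      have : 2 + δ ≠ 0 := by linarith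
      unfold PAModel.rate
      field_simp
      ring
    have hP : ∀ᶠ n : ℕ in atTop,
        Complex.exp ((-(t * ((2 + δ) / (3 + 2 * δ))) / √n : ℝ) * Complex.I)
          * ∫ ω, Complex.exp ((t / √n * M.dev n ω : ℝ) * Complex.I) ∂μ
        = charFun (P n : Measure ℝ) t := by
      filter_upwards [eventually_ge_atTop 1] with n hn
      change _ = charFun (μ.map (X n)) t
      rw [charFun_apply_real, integral_map (hXm n).aemeasurable (by fun_prop),
        ← integral_const_mul]
      refine integral_congr_ae (ae_of_all _ fun ω => ?_)
      dsimp only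
      rw [← Complex.exp_add, ← add_mul, ← Complex.ofReal_add, ← Complex.ofReal_mul]
      congr 3
      have hs : 0 < √(n : ℝ) := Real.sqrt_pos.2 (by exact_mod_cast hn)
      have hsq := Real.sq_sqrt (Nat.cast_nonneg (α := ℝ) n)
      have h3 : 3 + 2 * δ ≠ 0 := by linarith
      have h2 : 2 + δ ≠ 0 := by linarith
      simp only [hX, PAModel.dev, hp]
      generalize √(n : ℝ) = s at hs hsq
      rw [← hsq]
      field_simp
      ring
    have hphase : Tendsto (fun n : ℕ =>
        Complex.exp ((-(t * ((2 + δ) / (3 + 2 * δ))) / √n : ℝ) * Complex.I)) atTop (nhds 1) := by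
      have h0 : Tendsto (fun n : ℕ => -(t * ((2 + δ) / (3 + 2 * δ))) / √(n : ℝ)) atTop
          (nhds 0) :=
        (Real.tendsto_sqrt_atTop.comp tendsto_natCast_atTop_atTop).const_div_atTop _
      have hc : Continuous fun x : ℝ => Complex.exp (x * Complex.I) := by fun_prop
      have := (hc.tendsto 0).comp h0
      rwa [Complex.ofReal_zero, zero_mul, Complex.exp_zero] at this
    rw [hQ]
    have := (hphase.mul (M.tendsto_charFun_dev hδ t)).congr' hP
    rwa [one_mul] at this
  intro f
  refine (ProbabilityMeasure.tendsto_iff_forall_integral_tendsto.1 hPQ f).congr fun n => ?_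
  exact integral_map (hXm n).aemeasurable f.continuous.aestronglyMeasurable
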